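/- arXiv:2408.01972 — 3 statements merged into one kernel-verified Lean document; each statement's English description precedes it below -/
import Mathlib

section
/- Let S and A be finite nonempty sets, r : S×A → ℝ a reward function, and p a transition kernel on S×A. Let π_old and π_new be policies such that π_old(a|s) > 0 and π_new(a|s) > 0 for all s, a, and let d be a stationary state–action distribution of π_new. Suppose Q : S×A → ℝ and ρ_old ∈ ℝ satisfy the soft Bellman evaluation equation for π_old: for all (s,a), ρ_old = r(s,a) − Q(s,a) + Σ_{s'} p(s'|s,a) Σ_{a'} π_old(a'|s') (Q(s',a') − log π_old(a'|s')). Suppose further the policy-improvement condition holds: for every state s, Σ_a π_new(a|s)(Q(s,a) − log π_new(a|s)) ≥ Σ_a π_old(a|s)(Q(s,a) − log π_old(a|s)). Then ρ_old ≤ Σ_{(s,a)} d(s,a)(r(s,a) − log π_new(a|s)), i.e., the soft average reward of π_new is at least ρ_old. -/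
/-!
Average the Bellman equation for `πold` against the stationary distribution `d` of `πnew`.
By the improvement condition, the expected next-state soft value of `πold` is at most that of
`πnew`; by stationarity (`sum_stationary`), the latter averages under `d` to the `d`-mean of
`Q - log πnew`. The terms in `Q` cancel, leaving the soft average reward of `πnew`.
-/

open Finset

/-- The mean of `g` under `d` is unchanged by one step of the chain: transition by `p`, then draw
an action from `π`. -/
theorem sum_stationary {S A : Type*} [Fintype S] [Fintype A]
    (p : S → A → S → ℝ) (π d : S → A → ℝ)
    (hd_stat : ∀ s' a', d s' a' = π s' a' * ∑ s, ∑ a, d s a * p s a s')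
    (g : S → A → ℝ) :
    ∑ s, ∑ a, d s a * ∑ s', p s a s' * ∑ a', π s' a' * g s' a' = ∑ s, ∑ a, d s a * g s a := by
  have hstep : ∀ s', ∑ a', d s' a' * g s' a' =
      ∑ s, ∑ a, d s a * (p s a s' * ∑ a', π s' a' * g s' a') := by
    intro s'
    calc ∑ a', d s' a' * g s' a'
        = (∑ s, ∑ a, d s a * p s a s') * ∑ a', π s' a' * g s' a' := by
          rw [Finset.mul_sum]
          refine Finset.sum_congr rfl fun a' _ => ?_
          rw [hd_stat s' a']
          ring
      _ = _ := by simp only [Finset.sum_mul, mul_assoc]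
  symm
  calc ∑ s', ∑ a', d s' a' * g s' a'
      = ∑ s', ∑ s, ∑ a, d s a * (p s a s' * ∑ a', π s' a' * g s' a') :=
        Finset.sum_congr rfl fun s' _ => hstep s'
    _ = ∑ s, ∑ s', ∑ a, d s a * (p s a s' * ∑ a', π s' a' * g s' a') := Finset.sum_comm
    _ = ∑ s, ∑ a, ∑ s', d s a * (p s a s' * ∑ a', π s' a' * g s' a') :=
        Finset.sum_congr rfl fun s _ => Finset.sum_comm
    _ = _ := by simp only [Finset.mul_sum]

/-- Average Reward Soft Policy Improvement (Theorem 3.2). -/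
theorem average_reward_soft_policy_improvement
    {S A : Type*} [Fintype S] [Fintype A] [Nonempty S] [Nonempty A]
    (r : S → A → ℝ) (p : S → A → S → ℝ)
    (hp_nonneg : ∀ s a s', 0 ≤ p s a s')
    (hp_sum : ∀ s a, ∑ s', p s a s' = 1)
    (πold πnew : S → A → ℝ)
    (hπold_pos : ∀ s a, 0 < πold s a)
    (hπold_sum : ∀ s, ∑ a, πold s a = 1)
    (hπnew_pos : ∀ s a, 0 < πnew s a)
    (hπnew_sum : ∀ s, ∑ a, πnew s a = 1)
    (d : S → A → ℝ)
    (hd_nonneg : ∀ s a, 0 ≤ d s a)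
    (hd_sum : ∑ s, ∑ a, d s a = 1)
    (hd_stat : ∀ s' a', d s' a' = πnew s' a' * ∑ s, ∑ a, d s a * p s a s')
    (Q : S → A → ℝ) (ρold : ℝ)
    (hBellman : ∀ s a, ρold = r s a - Q s a +
      ∑ s', p s a s' * ∑ a', πold s' a' * (Q s' a' - Real.log (πold s' a')))
    (himprove : ∀ s,
      ∑ a, πold s a * (Q s a - Real.log (πold s a)) ≤
      ∑ a, πnew s a * (Q s a - Real.log (πnew s a))) :
    ρold ≤ ∑ s, ∑ a, d s a * (r s a - Real.log (πnew s a)) := by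
  have hstat := sum_stationary p πnew d hd_stat fun s a => Q s a - Real.log (πnew s a)
  calc ρold = ∑ s, ∑ a, d s a * ρold := by
        simp only [← Finset.sum_mul]
        rw [hd_sum, one_mul]
    _ ≤ ∑ s, ∑ a, d s a * (r s a - Q s a +
          ∑ s', p s a s' * ∑ a', πnew s' a' * (Q s' a' - Real.log (πnew s' a'))) := by
        refine Finset.sum_le_sum fun s _ => Finset.sum_le_sum fun a _ =>
          mul_le_mul_of_nonneg_left ?_ (hd_nonneg s a)
        rw [hBellman s a]
        exact add_le_add_right (Finset.sum_le_sum fun s' _ =>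
          mul_le_mul_of_nonneg_left (himprove s') (hp_nonneg s a s')) _
    _ = ∑ s, ∑ a, d s a * (r s a - Real.log (πnew s a)) := by
        simp only [mul_add (d _ _), Finset.sum_add_distrib]
        rw [hstat]
        simp only [← Finset.sum_add_distrib]
        refine Finset.sum_congr rfl fun s _ => Finset.sum_congr rfl fun a _ => ?_
        ring
end

section
/- Let X be a finite nonempty set and equip functions w : X → ℝ with the sup norm ‖·‖∞. Let L > 0, let f be an L-Lipschitz real-valued function on this space, let q* : X → ℝ, let M ≥ 0 satisfy |f(q*)| ≤ M, and let η > 0. Define the clip function g_η(x) = max(−(M+η), min(M+η, x)). Then for every w with ‖q* − w‖∞ ≤ η/L, one has g_η(f(w)) = f(w); that is, the clipping is inactive in an η/L-ball around q*. -/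
open Finset

/-- Core computation of Lemma C.3: the clipping g_η is inactive on f in an
η/L-ball (sup norm) around q*. -/
theorem clip_inactive_near_fixed_point
    {X : Type*} [Fintype X] [Nonempty X]
    (L : ℝ) (hL : 0 < L)
    (f : (X → ℝ) → ℝ)
    (hf_lip : ∀ w₁ w₂ : X → ℝ, |f w₁ - f w₂| ≤
      L * Finset.univ.sup' Finset.univ_nonempty (fun x => |w₁ x - w₂ x|))
    (qstar : X → ℝ) (M : ℝ) (hM : 0 ≤ M) (hfq : |f qstar| ≤ M)
    (η : ℝ) (hη : 0 < η)
    (gη : ℝ → ℝ) (hg : ∀ x, gη x = max (-(M + η)) (min (M + η) x))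
    (w : X → ℝ)
    (hw : Finset.univ.sup' Finset.univ_nonempty (fun x => |qstar x - w x|) ≤ η / L) :
    gη (f w) = f w := by
  have h : |f qstar - f w| ≤ η := by
    refine (hf_lip qstar w).trans ?_
    rw [mul_comm]
    exact (le_div_iff₀ hL).1 hw
  rw [abs_le] at h hfq
  rw [hg, min_eq_right (by linarith), max_eq_right (by linarith)]
end

section
/- Let X be a finite nonempty set and E the space of functions X → ℝ with the sup norm; let e ∈ E be the all-ones function. Let T : E → E be Lipschitz, let L > 0 and f : E → ℝ be L-Lipschitz, let q* ∈ E, set ρ* = f(q*), let M ≥ 0 satisfy |ρ*| ≤ M, let η > 0, and let g_η(x) = max(−(M+η), min(M+η, x)). Let w, Q : [0,∞) → E be differentiable curves with w(0) = Q(0) = w₀ satisfying, for all t ≥ 0, w'(t) = T(w(t)) − f(w(t))·e − w(t) and Q'(t) = T(Q(t)) − g_η(f(Q(t)))·e − Q(t). Assume the stability bound ‖q* − w(t)‖∞ ≤ (1+L)·‖q* − w₀‖∞ holds for all t ≥ 0. If ‖q* − w₀‖∞ ≤ η/(L·(1+L)), then Q(t) = w(t) for all t ≥ 0. -/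
/-!
The stability bound and the Lipschitz bound on `f` give
`|f (w t) - ρstar| ≤ L (1 + L) ‖qstar - w₀‖ ≤ η`, so `|f (w t)| ≤ M + η` and the clip acts as the
identity along `w`. Thus `w` also solves the clipped ODE. The clipped vector field is globally
Lipschitz because clipping does not increase distances, so uniqueness of solutions
(`ODE_solution_unique`, a consequence of Grönwall's inequality) yields `Q = w`.
-/


/-- Lemma C.3: solutions of the clipped ODE Q̇ = T(Q) − g_η(f(Q))e − Q started
close enough to q* coincide with solutions of the unclipped RVI ODE
ẇ = T(w) − f(w)e − w.  Here X → ℝ carries the sup norm (the Pi norm for a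
finite index type). -/
theorem clipped_ode_eq_unclipped_ode_near_qstar
    {X : Type*} [Fintype X] [Nonempty X]
    (T : (X → ℝ) → (X → ℝ)) (K : NNReal) (hT : LipschitzWith K T)
    (L : ℝ) (hL : 0 < L)
    (f : (X → ℝ) → ℝ)
    (hf_lip : ∀ w₁ w₂ : X → ℝ, |f w₁ - f w₂| ≤ L * ‖w₁ - w₂‖)
    (qstar : X → ℝ) (ρstar : ℝ) (hρ : ρstar = f qstar)
    (M : ℝ) (hM : 0 ≤ M) (hρM : |ρstar| ≤ M)
    (η : ℝ) (hη : 0 < η)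
    (gη : ℝ → ℝ) (hg : ∀ x, gη x = max (-(M + η)) (min (M + η) x))
    (w Q : ℝ → (X → ℝ)) (w₀ : X → ℝ)
    (hw0 : w 0 = w₀) (hQ0 : Q 0 = w₀)
    (hw_ode : ∀ t : ℝ, 0 ≤ t →
      HasDerivAt w (T (w t) - f (w t) • (fun _ : X => (1 : ℝ)) - w t) t)
    (hQ_ode : ∀ t : ℝ, 0 ≤ t →
      HasDerivAt Q (T (Q t) - gη (f (Q t)) • (fun _ : X => (1 : ℝ)) - Q t) t)
    (hstab : ∀ t : ℝ, 0 ≤ t → ‖qstar - w t‖ ≤ (1 + L) * ‖qstar - w₀‖)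
    (hclose : ‖qstar - w₀‖ ≤ η / (L * (1 + L))) :
    ∀ t : ℝ, 0 ≤ t → Q t = w t := by
  -- The clip is inactive along the unclipped trajectory.
  have hclip : ∀ t : ℝ, 0 ≤ t → gη (f (w t)) = f (w t) := by
    intro t ht
    have h1 : |f qstar - f (w t)| ≤ η := by
      calc |f qstar - f (w t)| ≤ L * ‖qstar - w t‖ := hf_lip _ _
        _ ≤ L * ((1 + L) * ‖qstar - w₀‖) := by gcongr; exact hstab t ht
        _ = ‖qstar - w₀‖ * (L * (1 + L)) := by ring
        _ ≤ η := (le_div_iff₀ (by positivity)).1 hclose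
    rw [← hρ] at h1
    obtain ⟨h2, h3⟩ := abs_le.1 h1
    obtain ⟨h4, h5⟩ := abs_le.1 hρM
    rw [hg, min_eq_right (by linarith), max_eq_right (by linarith)]
  have hf : LipschitzWith L.toNNReal f := by
    refine LipschitzWith.of_dist_le_mul fun x y => ?_
    rw [Real.dist_eq, dist_eq_norm, Real.coe_toNNReal L hL.le]
    exact hf_lip x y
  have hgf : LipschitzWith L.toNNReal fun x => gη (f x) := by
    simp only [hg]
    exact (hf.const_min _).const_max _
  have hge : LipschitzWith L.toNNReal fun x => gη (f x) • (fun _ : X => (1 : ℝ)) := by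
    refine LipschitzWith.of_dist_le_mul fun x y => ?_
    refine (dist_pi_le_iff (by positivity)).2 fun _ => ?_
    simpa using hgf.dist_le_mul x y
  have hv : LipschitzWith (K + L.toNNReal + 1)
      fun x => T x - gη (f x) • (fun _ : X => (1 : ℝ)) - x :=
    (hT.sub hge).sub LipschitzWith.id
  intro t ht
  refine ODE_solution_unique (a := 0) (b := t) (fun _ => hv)
    (fun s hs => (hQ_ode s hs.1).continuousAt.continuousWithinAt)
    (fun s hs => (hQ_ode s hs.1).hasDerivWithinAt)
    (fun s hs => (hw_ode s hs.1).continuousAt.continuousWithinAt)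
    (fun s hs => ?_) (hQ0.trans hw0.symm) ⟨ht, le_rfl⟩
  rw [hclip s hs.1]
  exact (hw_ode s hs.1).hasDerivWithinAt
end
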